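/- arXiv:2109.10555 — 2 statements merged into one kernel-verified Lean document; each statement's English description precedes it below -/
import Mathlib

section
/- From the multilinear class to linear classes: Let $\vec p=(p_1,\ldots,p_n)$ with $1\le p_i\le\infty$ and $1/p=\sum_{i=1}^n 1/p_i\ge 0$, and let $\vec w=(w_1,\ldots,w_n)$ be a tuple of a.e. positive finite functions on $\mathbb{R}^{d_1}\times\mathbb{R}^{d_2}$ with $w=\prod_{i=1}^n w_i$. Then $[w_i^{-p_i'}]_{A_{np_i'}}\le[\vec w]_{A_{\vec p}}^{p_i'}$ for each $i=1,\ldots,n$, and $[w^p]_{A_{np}}\le[\vec w]_{A_{\vec p}}^{p}$; in the case $p_i=1$ the first estimate is interpreted as $[w_i^{1/n}]_{A_1}\le[\vec w]_{A_{\vec p}}^{1/n}$, and in the case $p=\infty$ the second as $[w^{-1/n}]_{A_1}\le[\vec w]_{A_{\vec p}}^{1/n}$. -/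
open MeasureTheory ENNReal
open scoped Classical

noncomputable section

/-- A point of the bi-parameter space `ℝ^{d₁} × ℝ^{d₂}`. -/
abbrev Pt (d₁ d₂ : ℕ) := (Fin d₁ → ℝ) × (Fin d₂ → ℝ)

/-- The axis-parallel cube with corner `a` and side length `h`. -/
def cubeOf {d : ℕ} (a : Fin d → ℝ) (h : ℝ) : Set (Fin d → ℝ) :=
  Set.univ.pi fun i => Set.Ico (a i) (a i + h)

/-- An axis-parallel cube in `ℝ^d` (with positive side length). -/
def IsCube {d : ℕ} (I : Set (Fin d → ℝ)) : Prop :=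
  ∃ a h, 0 < h ∧ I = cubeOf a h

/-- A rectangle `R = I¹ × I²`: a product of axis-parallel cubes. -/
def IsRect {d₁ d₂ : ℕ} (R : Set (Pt d₁ d₂)) : Prop :=
  ∃ I₁ I₂, IsCube I₁ ∧ IsCube I₂ ∧ R = I₁ ×ˢ I₂

/-- A standard dyadic cube `2^{-k}([0,1)^d + m)`. -/
def IsDyadicCube {d : ℕ} (I : Set (Fin d → ℝ)) : Prop :=
  ∃ (k : ℤ) (m : Fin d → ℤ),
    I = Set.univ.pi fun i => Set.Ico ((2:ℝ) ^ (-k) * m i) ((2:ℝ) ^ (-k) * (m i + 1))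

/-- A standard dyadic rectangle. -/
def IsDyadicRect {d₁ d₂ : ℕ} (R : Set (Pt d₁ d₂)) : Prop :=
  ∃ I₁ I₂, IsDyadicCube I₁ ∧ IsDyadicCube I₂ ∧ R = I₁ ×ˢ I₂

variable {X : Type*} [MeasureSpace X]

/-- `ℝ≥0∞`-valued average `⟨f⟩_R` of a (nonnegative) function over `R`. -/
def avgE (R : Set X) (f : X → ℝ) : ℝ≥0∞ :=
  (∫⁻ x in R, ENNReal.ofReal (f x)) / volume R

/-- essential supremum of a (nonnegative) function on `R`. -/
def essSupE (R : Set X) (f : X → ℝ) : ℝ≥0∞ :=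
  essSup (fun x => ENNReal.ofReal (f x)) (volume.restrict R)

/-- real-valued average `⟨f⟩_R`. -/
def avgR (R : Set X) (f : X → ℝ) : ℝ :=
  (∫ x in R, f x) / (volume R).toReal

/-- Hölder conjugate exponent on `ℝ≥0∞`. -/
def dualExp (p : ℝ≥0∞) : ℝ≥0∞ :=
  if p = 1 then ∞ else if p = ∞ then 1 else ENNReal.ofReal (p.toReal / (p.toReal - 1))

/-- `⟨w^p⟩_R^{1/p}`, interpreted as `ess sup_R w` when `p = ∞`. -/
def mainFactor (R : Set X) (w : X → ℝ) (p : ℝ≥0∞) : ℝ≥0∞ :=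
  if p = ∞ then essSupE R w
  else (avgE R fun x => w x ^ p.toReal) ^ (1 / p.toReal)

/-- `⟨w^{-p'}⟩_R^{1/p'}`, interpreted as `ess sup_R w⁻¹` when `p = 1`. -/
def dualFactor (R : Set X) (w : X → ℝ) (p : ℝ≥0∞) : ℝ≥0∞ :=
  if p = 1 then essSupE R fun x => (w x)⁻¹
  else (avgE R fun x => w x ^ (-(dualExp p).toReal)) ^ (1 / (dualExp p).toReal)

/-- `A_r` ratio on a set, `1 ≤ r < ∞`, with the `A_1` interpretation at `r = 1`. -/
def ArRatio (r : ℝ≥0∞) (R : Set X) (v : X → ℝ) : ℝ≥0∞ :=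
  if r = 1 then avgE R v * essSupE R (fun x => (v x)⁻¹)
  else avgE R v * (avgE R fun x => v x ^ (-(1 / (r.toReal - 1)))) ^ (r.toReal - 1)

/-- Bi-parameter `A_r` characteristic: supremum over all rectangles. -/
def ArRect {d₁ d₂ : ℕ} (r : ℝ≥0∞) (v : Pt d₁ d₂ → ℝ) : ℝ≥0∞ :=
  ⨆ (R : Set (Pt d₁ d₂)) (_ : IsRect R), ArRatio r R v

/-- One-parameter `A_r` characteristic: supremum over all cubes. -/
def ArCube {d : ℕ} (r : ℝ≥0∞) (v : (Fin d → ℝ) → ℝ) : ℝ≥0∞ :=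
  ⨆ (I : Set (Fin d → ℝ)) (_ : IsCube I), ArRatio r I v

/-- `A_∞` ratio `⟨v⟩_R exp(⟨log v⁻¹⟩_R)`. -/
def AinftyRatio (R : Set X) (v : X → ℝ) : ℝ≥0∞ :=
  avgE R v * ENNReal.ofReal (Real.exp (avgR R fun x => Real.log (v x)⁻¹))

/-- Bi-parameter `A_∞` characteristic. -/
def AinftyRect {d₁ d₂ : ℕ} (v : Pt d₁ d₂ → ℝ) : ℝ≥0∞ :=
  ⨆ (R : Set (Pt d₁ d₂)) (_ : IsRect R), AinftyRatio R v

/-- Multilinear `A_{\vec p}` ratio `⟨w^p⟩_R^{1/p} ∏_i ⟨w_i^{-p_i'}⟩_R^{1/p_i'}`. -/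
def AvecRatio {n : ℕ} (p : Fin n → ℝ≥0∞) (w : Fin n → X → ℝ) (R : Set X) : ℝ≥0∞ :=
  mainFactor R (fun x => ∏ i, w i x) (∑ i, (p i)⁻¹)⁻¹ * ∏ i, dualFactor R (w i) (p i)

/-- Multilinear bi-parameter `A_{\vec p}` characteristic. -/
def AvecRect {d₁ d₂ n : ℕ} (p : Fin n → ℝ≥0∞) (w : Fin n → Pt d₁ d₂ → ℝ) : ℝ≥0∞ :=
  ⨆ (R : Set (Pt d₁ d₂)) (_ : IsRect R), AvecRatio p w R

/-- `A^*_{\vec p}` ratio: `⟨w⟩_R ⟨w_{n+1}^{-p}⟩_R^{1/p} ∏_{i=1}^n ⟨w_i^{-p_i'}⟩_R^{1/p_i'}`. -/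
def AstarRatio {n : ℕ} (p : Fin n → ℝ≥0∞) (w : Fin n → X → ℝ) (wl : X → ℝ) (R : Set X) :
    ℝ≥0∞ :=
  avgE R (fun x => (∏ i, w i x) * wl x) *
    (avgE R fun x => wl x ^ (-((∑ i, (p i)⁻¹)⁻¹).toReal)) ^ (∑ i, (p i)⁻¹).toReal *
    ∏ i, dualFactor R (w i) (p i)

/-- `A^*_{\vec p}` characteristic. -/
def AstarRect {d₁ d₂ n : ℕ} (p : Fin n → ℝ≥0∞) (w : Fin n → Pt d₁ d₂ → ℝ)
    (wl : Pt d₁ d₂ → ℝ) : ℝ≥0∞ :=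
  ⨆ (R : Set (Pt d₁ d₂)) (_ : IsRect R), AstarRatio p w wl R

/-- `μ`-weighted `ℝ≥0∞`-valued average over `R`. -/
def wAvg (R : Set X) (μ f : X → ℝ) : ℝ≥0∞ :=
  (∫⁻ x in R, ENNReal.ofReal (f x) * ENNReal.ofReal (μ x)) /
    (∫⁻ x in R, ENNReal.ofReal (μ x))

/-- `A_{q_n,q}(μ)` ratio, with ess sup interpretations when `q = ∞` or `q_n = 1`. -/
def AqRatio (qn q : ℝ≥0∞) (μ V : X → ℝ) (R : Set X) : ℝ≥0∞ :=
  (if q = ∞ then essSupE R V else (wAvg R μ fun x => V x ^ q.toReal) ^ (1 / q.toReal)) *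
  (if qn = 1 then essSupE R (fun x => (V x)⁻¹)
   else (wAvg R μ fun x => V x ^ (-(dualExp qn).toReal)) ^ (1 / (dualExp qn).toReal))

/-- `A_{q_n,q}(μ)` characteristic: supremum over rectangles. -/
def AqRect {d₁ d₂ : ℕ} (qn q : ℝ≥0∞) (μ V : Pt d₁ d₂ → ℝ) : ℝ≥0∞ :=
  ⨆ (R : Set (Pt d₁ d₂)) (_ : IsRect R), AqRatio qn q μ V R

/-- `μ`-weighted `A_1` characteristic of `u`: `sup_R ⟨u⟩_R^μ · ess sup_R u⁻¹`. -/
def A1wRect {d₁ d₂ : ℕ} (μ u : Pt d₁ d₂ → ℝ) : ℝ≥0∞ :=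
  ⨆ (R : Set (Pt d₁ d₂)) (_ : IsRect R), wAvg R μ u * essSupE R (fun x => (u x)⁻¹)

/-- `L^p` norm of an `ℝ≥0∞`-valued function, `0 < p ≤ ∞`. -/
def eNorm (g : X → ℝ≥0∞) (p : ℝ≥0∞) : ℝ≥0∞ :=
  if p = ∞ then essSup g volume else (∫⁻ x, g x ^ p.toReal) ^ (1 / p.toReal)

/-- `L^s(λ)` norm of an `ℝ≥0∞`-valued function, `0 < s < ∞`. -/
def eNormW (g : X → ℝ≥0∞) (s : ℝ) (lam : X → ℝ) : ℝ≥0∞ :=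
  (∫⁻ x, g x ^ s * ENNReal.ofReal (lam x)) ^ (1 / s)

/-- weak `L^p` quasinorm with respect to the measure `μ`. -/
def weakNorm {α : Type*} [MeasurableSpace α] (g : α → ℝ) (p : ℝ) (μ : Measure α) : ℝ≥0∞ :=
  ⨆ (t : ℝ) (_ : 0 < t), ENNReal.ofReal t * (μ {x | t < |g x|}) ^ (1 / p)

end

/-!
Put `w₀ = ∏ i, w_i`, `q₀ = p`, and adjoin the functions `w_i⁻¹` with exponents `q_i = p_i'`. The
resulting `n + 1` functions have product `1`, their exponents satisfy `∑ 1 / q_k = n`, and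
`[w⃗]_{A_p⃗}` on a rectangle `R` is the product of their normalized `L^{q_k}(R)` norms. In this
form all indices play the same role: each `f = f_k` is the reciprocal of the product of the others,
so Hölder's inequality bounds the product of `‖f‖_{q_k}` and `‖f⁻¹‖_{1 / (n - 1 / q_k)}` by the full
product. Raised to the power `q_k`, the left-hand side is the `A_{n q_k}` ratio of `f ^ q_k`; for
`q_k = ∞`, raised to the power `1 / n`, it is the `A_1` ratio of `f ^ (-1 / n)`.
-/

open scoped ProbabilityTheory

section LpNorm

variable {α ι 𝕜 : Type*} [MeasurableSpace α] {μ : Measure α}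

theorem eLpNorm_prod_le_prod_eLpNorm [NormedCommRing 𝕜] [NormOneClass 𝕜] {s : Finset ι}
    {f : ι → α → 𝕜} (hf : ∀ i ∈ s, AEStronglyMeasurable (f i) μ) (q : ι → ℝ≥0∞) :
    eLpNorm (∏ i ∈ s, f i) (∑ i ∈ s, (q i)⁻¹)⁻¹ μ ≤ ∏ i ∈ s, eLpNorm (f i) (q i) μ := by
  induction s using Finset.cons_induction with
  | empty =>
    simpa using eLpNormEssSup_le_of_ae_bound (μ := μ) (f := (1 : α → 𝕜)) (C := 1) (by simp)
  | cons a s ha ih =>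
    rw [Finset.forall_mem_cons] at hf
    simp only [Finset.prod_cons, Finset.sum_cons]
    have : HolderTriple (q a) (∑ i ∈ s, (q i)⁻¹)⁻¹ ((q a)⁻¹ + ∑ i ∈ s, (q i)⁻¹)⁻¹ := ⟨by simp⟩
    calc eLpNorm (f a * ∏ i ∈ s, f i) ((q a)⁻¹ + ∑ i ∈ s, (q i)⁻¹)⁻¹ μ
        ≤ eLpNorm (f a) (q a) μ * eLpNorm (∏ i ∈ s, f i) (∑ i ∈ s, (q i)⁻¹)⁻¹ μ :=
          eLpNorm_smul_le_mul_eLpNorm (φ := f a) (f := ∏ i ∈ s, f i) (p := q a)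
            (q := (∑ i ∈ s, (q i)⁻¹)⁻¹) (s.aestronglyMeasurable_prod hf.2) hf.1
      _ ≤ eLpNorm (f a) (q a) μ * ∏ i ∈ s, eLpNorm (f i) (q i) μ := by gcongr; exact ih hf.2

theorem eLpNorm_mul_eLpNorm_inv_le_prod_of_prod_eq_one [Fintype ι] [NormedField 𝕜]
    {f : ι → α → 𝕜} (hf : ∀ i, AEStronglyMeasurable (f i) μ) (hprod : ∀ᵐ x ∂μ, ∏ i, f i x = 1)
    (q : ι → ℝ≥0∞) {k : ι} (hk : q k ≠ 0) :
    eLpNorm (f k) (q k) μ * eLpNorm (fun x => (f k x)⁻¹) (∑ i, (q i)⁻¹ - (q k)⁻¹)⁻¹ μ ≤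
      ∏ i, eLpNorm (f i) (q i) μ := by
  have hinv : (fun x => (f k x)⁻¹) =ᵐ[μ] ∏ i ∈ Finset.univ.erase k, f i := by
    filter_upwards [hprod] with x hx
    rw [← Finset.mul_prod_erase _ _ (Finset.mem_univ k)] at hx
    rw [Finset.prod_apply, inv_eq_of_mul_eq_one_right hx]
  have hexp : ∑ i, (q i)⁻¹ - (q k)⁻¹ = ∑ i ∈ Finset.univ.erase k, (q i)⁻¹ := by
    rw [← Finset.add_sum_erase _ _ (Finset.mem_univ k),
      ENNReal.add_sub_cancel_left (ENNReal.inv_ne_top.2 hk)]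
  rw [eLpNorm_congr_ae hinv, hexp,
    ← Finset.mul_prod_erase _ (fun i => eLpNorm (f i) (q i) μ) (Finset.mem_univ k)]
  gcongr
  exact eLpNorm_prod_le_prod_eLpNorm (fun i _ => hf i) q

theorem ae_inv_nonneg {f : α → ℝ} (hf : 0 ≤ᵐ[μ] f) : 0 ≤ᵐ[μ] fun x => (f x)⁻¹ :=
  hf.mono fun _ hx => inv_nonneg.2 hx

theorem eLpNorm_rpow_of_nonneg {f : α → ℝ} (hf : 0 ≤ᵐ[μ] f) {s : ℝ} (hs : 0 < s) (q : ℝ≥0∞) :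
    eLpNorm (fun x => f x ^ s) q μ = eLpNorm f (q * ENNReal.ofReal s) μ ^ s := by
  rw [← eLpNorm_norm_rpow f hs]
  refine eLpNorm_congr_ae ?_
  filter_upwards [hf] with x hx
  rw [Real.norm_of_nonneg hx]

theorem cond_absolutelyContinuous_restrict (R : Set α) : μ[|R] ≪ μ.restrict R :=
  Measure.smul_absolutelyContinuous

end LpNorm

theorem holderConjugate_dualExp {p : ℝ≥0∞} (hp : 1 ≤ p) : p.HolderConjugate (dualExp p) := by
  unfold dualExp
  split_ifs with h1 htop
  · exact h1 ▸ HolderConjugate.one_top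
  · exact htop ▸ HolderConjugate.top_one
  · have hp1 : 1 < p.toReal := by
      simpa using (ENNReal.toReal_lt_toReal one_ne_top htop).2 (hp.lt_of_ne' h1)
    simpa only [Real.conjExponent, ENNReal.ofReal_toReal htop] using
      (Real.HolderConjugate.conjExponent hp1).ennrealOfReal

theorem dualExp_ne_top {p : ℝ≥0∞} (hp : p ≠ 1) : dualExp p ≠ ∞ := by
  rw [dualExp, if_neg hp]
  split_ifs <;> simp

section Averages

variable {X : Type*} [MeasureSpace X] {R : Set X} {f : X → ℝ}

theorem avgE_eq_eLpNorm_one (hf : 0 ≤ᵐ[volume.restrict R] f) :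
    avgE R f = eLpNorm f 1 volume[|R] := by
  rw [avgE, eLpNorm_one_eq_lintegral_enorm, ProbabilityTheory.cond, lintegral_smul_measure,
    smul_eq_mul, ENNReal.div_eq_inv_mul]
  congr 1
  refine lintegral_congr_ae ?_
  filter_upwards [hf] with x hx
  rw [Real.enorm_of_nonneg hx]

theorem avgE_rpow_eq_eLpNorm_rpow (hf : 0 ≤ᵐ[volume.restrict R] f) {s : ℝ} (hs : 0 < s) :
    avgE R (fun x => f x ^ s) = eLpNorm f (ENNReal.ofReal s) volume[|R] ^ s := by
  rw [avgE_eq_eLpNorm_one (hf.mono fun x hx => Real.rpow_nonneg hx s),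
    eLpNorm_rpow_of_nonneg ((cond_absolutelyContinuous_restrict R).ae_le hf) hs, one_mul]

theorem avgE_rpow_rpow_eq_eLpNorm (hf : 0 ≤ᵐ[volume.restrict R] f) {s : ℝ} (hs : 0 < s) :
    avgE R (fun x => f x ^ s) ^ (1 / s) = eLpNorm f (ENNReal.ofReal s) volume[|R] := by
  rw [avgE_rpow_eq_eLpNorm_rpow hf hs, one_div, ENNReal.rpow_rpow_inv hs.ne']

theorem essSupE_eq_eLpNorm_top (hR : volume R ≠ ∞) (hf : 0 ≤ᵐ[volume.restrict R] f) :
    essSupE R f = eLpNorm f ∞ volume[|R] := by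
  rw [essSupE, eLpNorm_exponent_top, eLpNormEssSup_eq_essSup_enorm, ProbabilityTheory.cond,
    essSup_ennreal_smul_measure (ENNReal.inv_ne_zero.2 hR)]
  refine essSup_congr_ae ?_
  filter_upwards [hf] with x hx
  rw [Real.enorm_of_nonneg hx]

theorem mainFactor_eq_eLpNorm (hR : volume R ≠ ∞) (hf : 0 ≤ᵐ[volume.restrict R] f) {p : ℝ≥0∞}
    (hp : p ≠ 0) : mainFactor R f p = eLpNorm f p volume[|R] := by
  unfold mainFactor
  split_ifs with htop
  · rw [htop, essSupE_eq_eLpNorm_top hR hf]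
  · rw [avgE_rpow_rpow_eq_eLpNorm hf (ENNReal.toReal_pos hp htop), ENNReal.ofReal_toReal htop]

theorem dualFactor_eq_eLpNorm_inv (hR : volume R ≠ ∞) (hf : 0 ≤ᵐ[volume.restrict R] f) {p : ℝ≥0∞}
    (hp : 1 ≤ p) :
    dualFactor R f p = eLpNorm (fun x => (f x)⁻¹) (dualExp p) volume[|R] := by
  have := holderConjugate_dualExp hp
  unfold dualFactor
  split_ifs with h1
  · rw [essSupE_eq_eLpNorm_top hR (ae_inv_nonneg hf), dualExp, if_pos h1]
  · have hpos : 0 < (dualExp p).toReal :=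
      ENNReal.toReal_pos (HolderConjugate.ne_zero (dualExp p) p) (dualExp_ne_top h1)
    simp only [Real.rpow_neg_eq_inv_rpow]
    rw [avgE_rpow_rpow_eq_eLpNorm (ae_inv_nonneg hf) hpos,
      ENNReal.ofReal_toReal (dualExp_ne_top h1)]

end Averages

section LinearRatio

variable {X : Type*} [MeasureSpace X] {R : Set X} {f : X → ℝ}

theorem ArRatio_eq_eLpNorm_mul_eLpNorm_inv (hR : volume R ≠ ∞) (hf : 0 ≤ᵐ[volume.restrict R] f)
    {r : ℝ≥0∞} (h1 : 1 ≤ r) (hr : r ≠ ∞) :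
    ArRatio r R f =
      eLpNorm f 1 volume[|R] * eLpNorm (fun x => (f x)⁻¹) (r - 1)⁻¹ volume[|R] := by
  unfold ArRatio
  split_ifs with h
  · rw [avgE_eq_eLpNorm_one hf, essSupE_eq_eLpNorm_top hR (ae_inv_nonneg hf), h, tsub_self,
      ENNReal.inv_zero]
  · have hpos : 0 < r.toReal - 1 := by
      have := (ENNReal.toReal_lt_toReal one_ne_top hr).2 (h1.lt_of_ne' h)
      rwa [ENNReal.toReal_one, ← sub_pos] at this
    have hexp : (r - 1)⁻¹ = ENNReal.ofReal (1 / (r.toReal - 1)) := by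
      rw [one_div, ENNReal.ofReal_inv_of_pos hpos, ENNReal.ofReal_sub _ zero_le_one,
        ENNReal.ofReal_toReal hr, ENNReal.ofReal_one]
    simp only [Real.rpow_neg_eq_inv_rpow]
    rw [avgE_eq_eLpNorm_one hf, hexp,
      ← avgE_rpow_rpow_eq_eLpNorm (ae_inv_nonneg hf) (one_div_pos.2 hpos), one_div_one_div]

theorem ArRatio_rpow_eq (hR : volume R ≠ ∞) (hf : 0 ≤ᵐ[volume.restrict R] f) {a q : ℝ≥0∞}
    (ha : a ≠ ∞) (hq0 : q ≠ 0) (hq : q ≠ ∞) (haq : q⁻¹ ≤ a) :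
    ArRatio (a * q) R (fun x => f x ^ q.toReal) =
      (eLpNorm f q volume[|R] * eLpNorm (fun x => (f x)⁻¹) (a - q⁻¹)⁻¹ volume[|R]) ^ q.toReal := by
  have hqpos : 0 < q.toReal := ENNReal.toReal_pos hq0 hq
  have hfc : 0 ≤ᵐ[volume[|R]] f := (cond_absolutelyContinuous_restrict R).ae_le hf
  have hinv : (fun x => (f x ^ q.toReal)⁻¹) =ᵐ[volume[|R]] fun x => (f x)⁻¹ ^ q.toReal :=
    hfc.mono fun x hx => (Real.inv_rpow hx _).symm
  have h1 : 1 ≤ a * q := by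
    rw [← ENNReal.inv_mul_cancel hq0 hq]
    gcongr
  have hexp : (a * q - 1)⁻¹ * q = (a - q⁻¹)⁻¹ := by
    rw [← ENNReal.inv_mul_cancel hq0 hq, ← ENNReal.sub_mul fun _ _ => hq,
      ENNReal.mul_inv (.inr hq) (.inr hq0), mul_assoc, ENNReal.inv_mul_cancel hq0 hq, mul_one]
  rw [ArRatio_eq_eLpNorm_mul_eLpNorm_inv hR (hf.mono fun x hx => Real.rpow_nonneg hx _) h1
      (ENNReal.mul_ne_top ha hq), eLpNorm_congr_ae hinv, eLpNorm_rpow_of_nonneg hfc hqpos,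
    eLpNorm_rpow_of_nonneg (ae_inv_nonneg hfc) hqpos, ENNReal.ofReal_toReal hq, one_mul, hexp,
    ENNReal.mul_rpow_of_nonneg _ _ hqpos.le]

theorem ArRatio_one_rpow_neg_inv_eq (hR : volume R ≠ ∞) (hf : 0 ≤ᵐ[volume.restrict R] f) {a : ℝ}
    (ha : 0 < a) :
    ArRatio 1 R (fun x => f x ^ (-a⁻¹)) =
      (eLpNorm f ∞ volume[|R] *
        eLpNorm (fun x => (f x)⁻¹) (ENNReal.ofReal a)⁻¹ volume[|R]) ^ a⁻¹ := by
  have hapos : 0 < a⁻¹ := inv_pos.2 ha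
  have hfc : 0 ≤ᵐ[volume[|R]] f := (cond_absolutelyContinuous_restrict R).ae_le hf
  have hinv : (fun x => (f x ^ (-a⁻¹))⁻¹) =ᵐ[volume[|R]] fun x => f x ^ a⁻¹ :=
    hfc.mono fun x hx => by simp only [Real.rpow_neg hx, inv_inv]
  rw [ArRatio_eq_eLpNorm_mul_eLpNorm_inv hR (hf.mono fun x hx => Real.rpow_nonneg hx _) le_rfl
      one_ne_top, eLpNorm_congr_ae hinv, eLpNorm_rpow_of_nonneg hfc hapos]
  simp only [Real.rpow_neg_eq_inv_rpow]
  rw [eLpNorm_rpow_of_nonneg (ae_inv_nonneg hfc) hapos, ENNReal.ofReal_inv_of_pos ha, one_mul,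
    tsub_self, ENNReal.inv_zero, ENNReal.top_mul (by simp),
    ENNReal.mul_rpow_of_nonneg _ _ hapos.le, mul_comm]

theorem ArRatio_one_one_le (R : Set X) : ArRatio 1 R (fun _ => 1) ≤ 1 := by
  have havg : avgE R (fun _ => 1) ≤ 1 := by simp [avgE, ENNReal.div_self_le_one]
  have hsup : essSupE R (fun _ => 1⁻¹) ≤ 1 := essSup_le_of_ae_le _ (.of_forall fun _ => by simp)
  simpa only [ArRatio, if_true, mul_one] using mul_le_mul' havg hsup

end LinearRatio

section Completion

variable {X : Type*} {n : ℕ}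

/-- The weights `w_i` completed to a family with product `1`: index `none` carries the product
weight `w = ∏ i, w_i`, and index `some i` carries `w_i⁻¹`. -/
noncomputable def completedWeight (w : Fin n → X → ℝ) : Option (Fin n) → X → ℝ
  | none => fun x => ∏ i, w i x
  | some i => fun x => (w i x)⁻¹

/-- The exponents of the completed family: `p` with `1 / p = ∑ i, 1 / p_i` at `none`, and the dual
exponent `p_i'` at `some i`. -/
noncomputable def completedExp (p : Fin n → ℝ≥0∞) : Option (Fin n) → ℝ≥0∞
  | none => (∑ i, (p i)⁻¹)⁻¹
  | some i => dualExp (p i)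

theorem sum_inv_completedExp {p : Fin n → ℝ≥0∞} (hp : ∀ i, 1 ≤ p i) :
    ∑ k, (completedExp p k)⁻¹ = n := by
  have hdual (i : Fin n) : (p i)⁻¹ + (dualExp (p i))⁻¹ = 1 :=
    have := holderConjugate_dualExp (hp i)
    HolderConjugate.inv_add_inv_eq_one _ _
  simp only [Fintype.sum_option, completedExp, inv_inv, ← Finset.sum_add_distrib, hdual,
    Finset.sum_const, Finset.card_univ, Fintype.card_fin, nsmul_eq_mul, mul_one]

theorem inv_completedExp_le {p : Fin n → ℝ≥0∞} (hp : ∀ i, 1 ≤ p i) (k : Option (Fin n)) :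
    (completedExp p k)⁻¹ ≤ n := by
  rw [← sum_inv_completedExp hp]
  exact Finset.single_le_sum_of_canonicallyOrdered (f := fun k => (completedExp p k)⁻¹)
    (Finset.mem_univ k)

theorem completedExp_ne_zero {p : Fin n → ℝ≥0∞} (hp : ∀ i, 1 ≤ p i) (k : Option (Fin n)) :
    completedExp p k ≠ 0 :=
  ENNReal.inv_ne_top.1 (ne_top_of_le_ne_top (natCast_ne_top n) (inv_completedExp_le hp k))

theorem prod_completedWeight {w : Fin n → X → ℝ} {x : X} (hx : ∀ i, 0 < w i x) :
    ∏ k, completedWeight w k x = 1 := by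
  simp only [Fintype.prod_option, completedWeight, Finset.prod_inv_distrib]
  exact mul_inv_cancel₀ (Finset.prod_pos fun i _ => hx i).ne'

theorem completedWeight_nonneg {w : Fin n → X → ℝ} {x : X} (hx : ∀ i, 0 < w i x)
    (k : Option (Fin n)) : 0 ≤ completedWeight w k x := by
  cases k with
  | none => exact Finset.prod_nonneg fun i _ => (hx i).le
  | some i => exact inv_nonneg.2 (hx i).le

theorem aemeasurable_completedWeight [MeasurableSpace X] {μ : Measure X} {w : Fin n → X → ℝ}
    (hw : ∀ i, AEMeasurable (w i) μ) (k : Option (Fin n)) :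
    AEMeasurable (completedWeight w k) μ := by
  cases k with
  | none => exact Finset.univ.aemeasurable_fun_prod fun i _ => hw i
  | some i => exact (hw i).inv

variable [MeasureSpace X] {R : Set X} {p : Fin n → ℝ≥0∞} {w : Fin n → X → ℝ}

theorem AvecRatio_eq_prod_eLpNorm (hR : volume R ≠ ∞) (hp : ∀ i, 1 ≤ p i)
    (hpos : ∀ᵐ x ∂volume.restrict R, ∀ i, 0 < w i x) :
    AvecRatio p w R = ∏ k, eLpNorm (completedWeight w k) (completedExp p k) volume[|R] := by
  rw [AvecRatio, Fintype.prod_option]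
  congr 1
  · exact mainFactor_eq_eLpNorm hR (hpos.mono fun x hx => completedWeight_nonneg hx none)
      (completedExp_ne_zero hp none)
  · exact Finset.prod_congr rfl fun i _ =>
      dualFactor_eq_eLpNorm_inv hR (hpos.mono fun x hx => (hx i).le) (hp i)

theorem eLpNorm_completedWeight_mul_eLpNorm_inv_le (hR : volume R ≠ ∞) (hp : ∀ i, 1 ≤ p i)
    (hw : ∀ i, AEMeasurable (w i) (volume.restrict R))
    (hpos : ∀ᵐ x ∂volume.restrict R, ∀ i, 0 < w i x) (k : Option (Fin n)) :
    eLpNorm (completedWeight w k) (completedExp p k) volume[|R] *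
        eLpNorm (fun x => (completedWeight w k x)⁻¹) (n - (completedExp p k)⁻¹)⁻¹ volume[|R] ≤
      AvecRatio p w R := by
  have hac := cond_absolutelyContinuous_restrict (μ := volume) R
  rw [AvecRatio_eq_prod_eLpNorm hR hp hpos, ← sum_inv_completedExp hp]
  exact eLpNorm_mul_eLpNorm_inv_le_prod_of_prod_eq_one
    (fun k => ((aemeasurable_completedWeight hw k).mono_ac hac).aestronglyMeasurable)
    (hac.ae_le (hpos.mono fun x hx => prod_completedWeight hx)) _ (completedExp_ne_zero hp k)

theorem ArRatio_completedWeight_rpow_le (hR : volume R ≠ ∞) (hp : ∀ i, 1 ≤ p i)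
    (hw : ∀ i, AEMeasurable (w i) (volume.restrict R))
    (hpos : ∀ᵐ x ∂volume.restrict R, ∀ i, 0 < w i x) {k : Option (Fin n)}
    (hk : completedExp p k ≠ ∞) :
    ArRatio (n * completedExp p k) R (fun x => completedWeight w k x ^ (completedExp p k).toReal) ≤
      AvecRatio p w R ^ (completedExp p k).toReal := by
  rw [ArRatio_rpow_eq hR (hpos.mono fun x hx => completedWeight_nonneg hx k) (natCast_ne_top n)
    (completedExp_ne_zero hp k) hk (inv_completedExp_le hp k)]
  gcongr
  exact eLpNorm_completedWeight_mul_eLpNorm_inv_le hR hp hw hpos k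

theorem ArRatio_one_completedWeight_rpow_le (hR : volume R ≠ ∞) (hp : ∀ i, 1 ≤ p i)
    (hw : ∀ i, AEMeasurable (w i) (volume.restrict R))
    (hpos : ∀ᵐ x ∂volume.restrict R, ∀ i, 0 < w i x) {k : Option (Fin n)}
    (hk : completedExp p k = ∞) :
    ArRatio 1 R (fun x => completedWeight w k x ^ (-(n : ℝ)⁻¹)) ≤
      AvecRatio p w R ^ (n : ℝ)⁻¹ := by
  obtain rfl | hn := n.eq_zero_or_pos
  · -- `(0 : ℝ)⁻¹ = 0`, so both powers are constantly `1`.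
    simpa using ArRatio_one_one_le R
  · rw [ArRatio_one_rpow_neg_inv_eq hR (hpos.mono fun x hx => completedWeight_nonneg hx k)
      (Nat.cast_pos.2 hn)]
    gcongr
    simpa [hk] using eLpNorm_completedWeight_mul_eLpNorm_inv_le hR hp hw hpos k

end Completion

theorem biSup_le_biSup_rpow {β : Type*} {S : Set β} {F G : β → ℝ≥0∞} {s : ℝ} (hs : 0 ≤ s)
    (h : ∀ b ∈ S, F b ≤ G b ^ s) : ⨆ b ∈ S, F b ≤ (⨆ b ∈ S, G b) ^ s :=
  iSup₂_le fun b hb => (h b hb).trans <| ENNReal.rpow_le_rpow (le_biSup G hb) hs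

theorem IsRect.volume_ne_top {d₁ d₂ : ℕ} {R : Set (Pt d₁ d₂)} (hR : IsRect R) : volume R ≠ ∞ := by
  have hcube {d : ℕ} (a : Fin d → ℝ) (h : ℝ) : volume (cubeOf a h) ≠ ∞ := by
    rw [cubeOf, Real.volume_pi_Ico]
    exact ENNReal.prod_ne_top fun i _ => ENNReal.ofReal_ne_top
  obtain ⟨_, _, ⟨a, s, -, rfl⟩, ⟨b, t, -, rfl⟩, rfl⟩ := hR
  rw [Measure.volume_eq_prod, Measure.prod_prod]
  exact ENNReal.mul_ne_top (hcube a s) (hcube b t)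

theorem statement3_general {X : Type*} [MeasureSpace X] {n : ℕ} {𝓡 : Set (Set X)}
    (h𝓡 : ∀ R ∈ 𝓡, volume R ≠ ∞) (p : Fin n → ℝ≥0∞) (hp : ∀ i, 1 ≤ p i)
    (w : Fin n → X → ℝ) (hw : ∀ i, AEMeasurable (w i)) (hwpos : ∀ i, ∀ᵐ x, 0 < w i x) :
    (∀ i, p i ≠ 1 →
      ⨆ R ∈ 𝓡, ArRatio (n * dualExp (p i)) R (fun x => w i x ^ (-(dualExp (p i)).toReal))
        ≤ (⨆ R ∈ 𝓡, AvecRatio p w R) ^ (dualExp (p i)).toReal) ∧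
    (∀ i, p i = 1 →
      ⨆ R ∈ 𝓡, ArRatio 1 R (fun x => w i x ^ (n : ℝ)⁻¹)
        ≤ (⨆ R ∈ 𝓡, AvecRatio p w R) ^ (n : ℝ)⁻¹) ∧
    ((∑ i, (p i)⁻¹)⁻¹ ≠ ∞ →
      ⨆ R ∈ 𝓡, ArRatio (n * (∑ i, (p i)⁻¹)⁻¹) R
          (fun x => (∏ i, w i x) ^ ((∑ i, (p i)⁻¹)⁻¹).toReal)
        ≤ (⨆ R ∈ 𝓡, AvecRatio p w R) ^ ((∑ i, (p i)⁻¹)⁻¹).toReal) ∧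
    ((∑ i, (p i)⁻¹)⁻¹ = ∞ →
      ⨆ R ∈ 𝓡, ArRatio 1 R (fun x => (∏ i, w i x) ^ (-(n : ℝ)⁻¹))
        ≤ (⨆ R ∈ 𝓡, AvecRatio p w R) ^ (n : ℝ)⁻¹) := by
  have hwR (R : Set X) (i : Fin n) : AEMeasurable (w i) (volume.restrict R) := (hw i).restrict
  have hposR (R : Set X) : ∀ᵐ x ∂volume.restrict R, ∀ i, 0 < w i x :=
    ae_restrict_of_ae (ae_all_iff.2 hwpos)
  have hn : 0 ≤ (n : ℝ)⁻¹ := by positivity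
  refine ⟨fun i hi => biSup_le_biSup_rpow toReal_nonneg fun R hR => ?_,
    fun i hi => biSup_le_biSup_rpow hn fun R hR => ?_,
    fun hP => biSup_le_biSup_rpow toReal_nonneg fun R hR => ?_,
    fun hP => biSup_le_biSup_rpow hn fun R hR => ?_⟩
  · simpa only [completedWeight, completedExp, Real.rpow_neg_eq_inv_rpow] using
      ArRatio_completedWeight_rpow_le (k := some i) (h𝓡 R hR) hp (hwR R) (hposR R)
        (dualExp_ne_top hi)
  · simpa only [completedWeight, Real.rpow_neg_eq_inv_rpow, inv_inv] using
      ArRatio_one_completedWeight_rpow_le (k := some i) (h𝓡 R hR) hp (hwR R) (hposR R)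
        (if_pos hi)
  · exact ArRatio_completedWeight_rpow_le (k := none) (h𝓡 R hR) hp (hwR R) (hposR R) hP
  · exact ArRatio_one_completedWeight_rpow_le (k := none) (h𝓡 R hR) hp (hwR R) (hposR R) hP

/-- From the multilinear class to linear classes.
Let `1 ≤ p_i ≤ ∞`, `1/p = ∑ 1/p_i ≥ 0`, `w = ∏ w_i`.  Then
`[w_i^{-p_i'}]_{A_{n p_i'}} ≤ [w⃗]_{A_{p⃗}}^{p_i'}` (interpreted as
`[w_i^{1/n}]_{A_1} ≤ [w⃗]^{1/n}` when `p_i = 1`), and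
`[w^p]_{A_{np}} ≤ [w⃗]^p` (interpreted as `[w^{-1/n}]_{A_1} ≤ [w⃗]^{1/n}` when `p = ∞`). -/
theorem statement3 {d₁ d₂ n : ℕ}
    (p : Fin n → ℝ≥0∞) (hp : ∀ i, 1 ≤ p i)
    (w : Fin n → Pt d₁ d₂ → ℝ) (hw : ∀ i, Measurable (w i))
    (hwpos : ∀ i, ∀ᵐ x ∂(volume : Measure (Pt d₁ d₂)), 0 < w i x) :
    (∀ i, p i ≠ 1 →
      ArRect ((n : ℝ≥0∞) * dualExp (p i))
          (fun x => w i x ^ (-(dualExp (p i)).toReal))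
        ≤ AvecRect p w ^ (dualExp (p i)).toReal) ∧
    (∀ i, p i = 1 →
      ArRect (d₁ := d₁) (d₂ := d₂) 1 (fun x => w i x ^ ((n : ℝ)⁻¹))
        ≤ AvecRect p w ^ ((n : ℝ)⁻¹)) ∧
    ((∑ i, (p i)⁻¹)⁻¹ ≠ ∞ →
      ArRect ((n : ℝ≥0∞) * (∑ i, (p i)⁻¹)⁻¹)
          (fun x => (∏ i, w i x) ^ ((∑ i, (p i)⁻¹)⁻¹).toReal)
        ≤ AvecRect p w ^ ((∑ i, (p i)⁻¹)⁻¹).toReal) ∧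
    ((∑ i, (p i)⁻¹)⁻¹ = ∞ →
      ArRect (d₁ := d₁) (d₂ := d₂) 1 (fun x => (∏ i, w i x) ^ (-(n : ℝ)⁻¹))
        ≤ AvecRect p w ^ ((n : ℝ)⁻¹)) :=
  statement3_general (𝓡 := {R | IsRect R}) (fun _ hR => hR.volume_ne_top) p hp w
    (fun i => (hw i).aemeasurable) hwpos
end

section
/- Slice characterization of bi-parameter $A_p$: Let $1<p<\infty$ and let $w$ be a weight on $\mathbb{R}^{d_1}\times\mathbb{R}^{d_2}$. Then $[w]_{A_p(\mathbb{R}^{d_1}\times\mathbb{R}^{d_2})}<\infty$ if and only if $\max\big(\mathrm{ess\,sup}_{x_1\in\mathbb{R}^{d_1}}[w(x_1,\cdot)]_{A_p(\mathbb{R}^{d_2})},\ \mathrm{ess\,sup}_{x_2\in\mathbb{R}^{d_2}}[w(\cdot,x_2)]_{A_p(\mathbb{R}^{d_1})}\big)<\infty$; moreover this maximum is at most $[w]_{A_p(\mathbb{R}^{d_1}\times\mathbb{R}^{d_2})}$, while $[w]_{A_p(\mathbb{R}^{d_1}\times\mathbb{R}^{d_2})}$ is bounded by a constant (depending on $p$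 and the dimensions) times a power of this maximum. -/
open MeasureTheory ENNReal
open scoped Classical

/-!
Write `σ = w ^ (-1/(p-1))`, and let `M` and `N` bound the slice characteristics in the second and
in the first variable.

*Upper bound.* Put `F x = ∫ σ(x, y) dy`. For fixed `y`, Hölder's inequality gives
`(∫ F)^p ∫ w(x, y) dx ≤ N ∫ F(x)^p w(x, y) dx`. Integrating in `y` and using the slice condition in
the form `F(x)^p ∫ w(x, y) dy ≤ M F(x)` bounds `(∫ F)^p ∬ w` by `M N ∫ F`. Cancelling a factor
`∫ F = ∬ σ` shows `[w]_{A_p} ≤ M N`.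

*Lower bound.* Fix a cube `J` and shrink a cube around `x₁`: by Lebesgue differentiation of
`x₁ ↦ ∫_J w(x₁, ·)` and `x₁ ↦ ∫_J σ(x₁, ·)`, the `A_p` ratios of the rectangles bound the ratio of
`w(x₁, ·)` on `J` for almost every `x₁`. The exceptional null set depends on `J`, but it suffices to
treat the countably many rational cubes, since every cube is contained in rational cubes of almost
the same volume.
-/

namespace Muckenhoupt

open Filter Set
open scoped ProbabilityTheory Topology

section Preliminaries

lemma iSup_min_natCast (a : ℝ≥0∞) : ⨆ n : ℕ, min a n = a := by
  rw [← inf_iSup_eq, ENNReal.iSup_natCast, inf_top_eq]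

lemma rpow_eq_mul_rpow_sub_one {p : ℝ} (hp : 1 ≤ p) (a : ℝ≥0∞) : a ^ p = a * a ^ (p - 1) := by
  simpa using ENNReal.rpow_add_of_nonneg (x := a) 1 (p - 1) zero_le_one (sub_nonneg.2 hp)

lemma mul_le_max_rpow_two (a b : ℝ≥0∞) : a * b ≤ max a b ^ (2 : ℝ) := by
  rw [ENNReal.rpow_two, sq]
  gcongr
  exacts [le_max_left a b, le_max_right a b]

variable {α β : Type*} [MeasurableSpace α] [MeasurableSpace β] {μ : Measure α} {ν : Measure β}

lemma lintegral_cond (μ : Measure α) (s : Set α) (f : α → ℝ≥0∞) :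
    ∫⁻ x, f x ∂μ[|s] = (∫⁻ x in s, f x ∂μ) / μ s := by
  rw [ProbabilityTheory.cond, lintegral_smul_measure, smul_eq_mul, ENNReal.div_eq_inv_mul]

lemma cond_congr_set {s t : Set α} (h : s =ᵐ[μ] t) : μ[|s] = μ[|t] := by
  rw [ProbabilityTheory.cond, ProbabilityTheory.cond, measure_congr h, Measure.restrict_congr_set h]

lemma cond_prod [SFinite μ] [SFinite ν] {s : Set α} {t : Set β}
    (hs₀ : μ s ≠ 0) (hs : μ s ≠ ∞) :
    (μ.prod ν)[|s ×ˢ t] = μ[|s].prod ν[|t] := by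
  simp only [ProbabilityTheory.cond, Measure.prod_smul_left, Measure.prod_smul_right,
    smul_smul, Measure.prod_restrict, Measure.prod_prod,
    ENNReal.mul_inv (.inl hs₀) (.inl hs)]
  rw [mul_comm]

lemma ae_comp_swap [SFinite μ] [SFinite ν] {q : α × β → Prop} (hq : ∀ᵐ z ∂μ.prod ν, q z) :
    ∀ᵐ z ∂ν.prod μ, q z.swap :=
  Measure.measurePreserving_swap.quasiMeasurePreserving.ae hq

lemma cond_le_smul_cond {s t : Set α} (hst : s ⊆ t) (ht₀ : μ t ≠ 0) (ht : μ t ≠ ∞) :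
    μ[|s] ≤ (μ t / μ s) • μ[|t] := by
  have hcancel : μ t / μ s * (μ t)⁻¹ = (μ s)⁻¹ := by
    rw [mul_comm, ← mul_div_assoc, ENNReal.inv_mul_cancel ht₀ ht, one_div]
  rw [ProbabilityTheory.cond, ProbabilityTheory.cond, smul_smul, hcancel]
  gcongr

lemma isLocallyFiniteMeasure_withDensity_of_le [TopologicalSpace α] [IsLocallyFiniteMeasure μ]
    {f : α → ℝ≥0∞} {c : NNReal} (hf : ∀ x, f x ≤ c) :
    IsLocallyFiniteMeasure (μ.withDensity f) := by
  refine Measure.isLocallyFiniteMeasure_of_le (μ := c • μ) ?_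
  calc μ.withDensity f ≤ μ.withDensity fun _ => c := withDensity_mono (.of_forall hf)
    _ = c • μ := withDensity_const (c : ℝ≥0∞)

end Preliminaries

section Ratio

variable {α β : Type*} [MeasurableSpace α] [MeasurableSpace β]

/-- The product `(∫ W dμ) (∫ W^{-1/(p-1)} dμ)^{p-1}` bounded in the `A_p` condition. Averages over
a set `s` are obtained by taking for `μ` the normalized restriction `μ[|s]`. -/
noncomputable def apRatio (p : ℝ) (μ : Measure α) (W : α → ℝ≥0∞) : ℝ≥0∞ :=
  (∫⁻ x, W x ∂μ) * (∫⁻ x, W x ^ (-(1 / (p - 1))) ∂μ) ^ (p - 1)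

lemma apRatio_mono_measure {p : ℝ} (hp : 1 ≤ p) {μ ν : Measure α} (h : μ ≤ ν) (W : α → ℝ≥0∞) :
    apRatio p μ W ≤ apRatio p ν W := by
  have : 0 ≤ p - 1 := sub_nonneg.2 hp
  unfold apRatio
  gcongr

lemma apRatio_smul_measure {p : ℝ} (hp : 1 ≤ p) (c : ℝ≥0∞) (μ : Measure α) (W : α → ℝ≥0∞) :
    apRatio p (c • μ) W = c ^ p * apRatio p μ W := by
  simp only [apRatio, lintegral_smul_measure, smul_eq_mul, rpow_eq_mul_rpow_sub_one hp c,
    ENNReal.mul_rpow_of_nonneg _ _ (sub_nonneg.2 hp)]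
  ring

lemma apRatio_cond_le {p : ℝ} (hp : 1 ≤ p) {μ : Measure α} {s t : Set α} (hst : s ⊆ t)
    (ht₀ : μ t ≠ 0) (ht : μ t ≠ ∞) (W : α → ℝ≥0∞) :
    apRatio p μ[|s] W ≤ (μ t / μ s) ^ p * apRatio p μ[|t] W :=
  (apRatio_mono_measure hp (cond_le_smul_cond hst ht₀ ht) W).trans
    (apRatio_smul_measure hp _ _ W).le

lemma apRatio_prod_swap (p : ℝ) (μ : Measure α) (ν : Measure β) [SFinite μ] [SFinite ν]
    (W : α × β → ℝ≥0∞) :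
    apRatio p (ν.prod μ) (W ∘ Prod.swap) = apRatio p (μ.prod ν) W := by
  simp only [apRatio, Function.comp_apply]
  rw [lintegral_prod_swap W, lintegral_prod_swap fun z => W z ^ (-(1 / (p - 1)))]

end Ratio

section Product

variable {α β : Type*} [MeasurableSpace α] [MeasurableSpace β] {p : ℝ}

lemma rpow_lintegral_le {μ : Measure α} (hp : 1 < p) {f W : α → ℝ≥0∞}
    (hf : AEMeasurable f μ) (hW : AEMeasurable W μ)
    (hW₀ : ∀ᵐ x ∂μ, W x ≠ 0) (hW_top : ∀ᵐ x ∂μ, W x ≠ ∞) :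
    (∫⁻ x, f x ∂μ) ^ p ≤
      (∫⁻ x, f x ^ p * W x ∂μ) * (∫⁻ x, W x ^ (-(1 / (p - 1))) ∂μ) ^ (p - 1) := by
  have hp₀ : 0 < p := one_pos.trans hp
  have hp₁ : p - 1 ≠ 0 := (sub_pos.2 hp).ne'
  set q := Real.conjExponent p with hq
  have factor : ∫⁻ x, f x ∂μ = ∫⁻ x, f x * W x ^ (1 / p) * W x ^ (-(1 / p)) ∂μ := by
    refine lintegral_congr_ae ?_
    filter_upwards [hW₀, hW_top] with x h₀ h_top
    rw [mul_assoc, ← ENNReal.rpow_add _ _ h₀ h_top, add_neg_cancel, ENNReal.rpow_zero, mul_one]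
  have holder : ∫⁻ x, f x ∂μ ≤ (∫⁻ x, (f x * W x ^ (1 / p)) ^ p ∂μ) ^ (1 / p) *
      (∫⁻ x, (W x ^ (-(1 / p))) ^ q ∂μ) ^ (1 / q) :=
    factor.trans_le <| ENNReal.lintegral_mul_le_Lp_mul_Lq μ
      (Real.HolderConjugate.conjExponent hp) (hf.mul (hW.pow_const _)) (hW.pow_const _)
  have hp_inv : 1 / p * p = 1 := one_div_mul_cancel hp₀.ne'
  have hq_exp : -(1 / p) * q = -(1 / (p - 1)) := by
    rw [hq, Real.conjExponent]; field_simp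
  have hq_outer : 1 / q * p = p - 1 := by
    rw [hq, Real.conjExponent]; field_simp
  calc (∫⁻ x, f x ∂μ) ^ p
      ≤ ((∫⁻ x, (f x * W x ^ (1 / p)) ^ p ∂μ) ^ (1 / p) *
          (∫⁻ x, (W x ^ (-(1 / p))) ^ q ∂μ) ^ (1 / q)) ^ p := by gcongr
    _ = _ := by
      simp only [ENNReal.mul_rpow_of_nonneg _ _ hp₀.le, ← ENNReal.rpow_mul, hp_inv, hq_exp,
        hq_outer, ENNReal.rpow_one]

lemma rpow_lintegral_mul_lintegral_le {μ : Measure α} (hp : 1 < p) {f W : α → ℝ≥0∞}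
    (hf : AEMeasurable f μ) (hW : AEMeasurable W μ)
    (hW₀ : ∀ᵐ x ∂μ, W x ≠ 0) (hW_top : ∀ᵐ x ∂μ, W x ≠ ∞) :
    (∫⁻ x, f x ∂μ) ^ p * ∫⁻ x, W x ∂μ ≤ apRatio p μ W * ∫⁻ x, f x ^ p * W x ∂μ :=
  calc (∫⁻ x, f x ∂μ) ^ p * ∫⁻ x, W x ∂μ
      ≤ (∫⁻ x, f x ^ p * W x ∂μ) * (∫⁻ x, W x ^ (-(1 / (p - 1))) ∂μ) ^ (p - 1) *
          ∫⁻ x, W x ∂μ := by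
        gcongr
        exact rpow_lintegral_le hp hf hW hW₀ hW_top
    _ = apRatio p μ W * ∫⁻ x, f x ^ p * W x ∂μ := by
        rw [apRatio]; ring

variable {μ : Measure α} {ν : Measure β} {W : α × β → ℝ≥0∞} {M N : ℝ≥0∞}

lemma rpow_lintegral_mul_lintegral_prod_le [SFinite μ] [SFinite ν] (hp : 1 < p)
    (hW : Measurable W) (hW₀ : ∀ᵐ z ∂μ.prod ν, W z ≠ 0) (hW_top : ∀ᵐ z ∂μ.prod ν, W z ≠ ∞)
    (hN : ∀ᵐ y ∂ν, apRatio p μ (fun x => W (x, y)) ≤ N) {f : α → ℝ≥0∞} (hf : Measurable f) :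
    (∫⁻ x, f x ∂μ) ^ p * ∫⁻ z, W z ∂μ.prod ν ≤ N * ∫⁻ x, f x ^ p * ∫⁻ y, W (x, y) ∂ν ∂μ := by
  have ae_slice {q : α × β → Prop} (hq : ∀ᵐ z ∂μ.prod ν, q z) : ∀ᵐ y ∂ν, ∀ᵐ x ∂μ, q (x, y) :=
    Measure.ae_ae_of_ae_prod (ae_comp_swap hq)
  have hfW : Measurable fun z : α × β => f z.1 ^ p * W z :=
    ((hf.comp measurable_fst).pow_const p).mul hW
  calc (∫⁻ x, f x ∂μ) ^ p * ∫⁻ z, W z ∂μ.prod ν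
      = ∫⁻ y, (∫⁻ x, f x ∂μ) ^ p * ∫⁻ x, W (x, y) ∂μ ∂ν := by
        rw [lintegral_prod_symm' _ hW, lintegral_const_mul _ hW.lintegral_prod_left']
    _ ≤ ∫⁻ y, N * ∫⁻ x, f x ^ p * W (x, y) ∂μ ∂ν := by
        refine lintegral_mono_ae ?_
        filter_upwards [hN, ae_slice hW₀, ae_slice hW_top] with y hy h₀ h_top
        have hWy : Measurable fun x => W (x, y) := hW.comp measurable_prodMk_right
        exact (rpow_lintegral_mul_lintegral_le hp hf.aemeasurable hWy.aemeasurable h₀ h_top).trans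
          (by gcongr)
    _ = N * ∫⁻ x, ∫⁻ y, f x ^ p * W (x, y) ∂ν ∂μ := by
        rw [lintegral_const_mul _ hfW.lintegral_prod_left', ← lintegral_prod_symm' _ hfW,
          lintegral_prod _ hfW.aemeasurable]
    _ = N * ∫⁻ x, f x ^ p * ∫⁻ y, W (x, y) ∂ν ∂μ := by
        congr! with x
        exact lintegral_const_mul _ (hW.comp measurable_prodMk_left)

lemma lintegral_prod_mul_rpow_lintegral_le [SFinite μ] [SFinite ν] (hp : 1 < p)
    (hW : Measurable W) (hW₀ : ∀ᵐ z ∂μ.prod ν, W z ≠ 0) (hW_top : ∀ᵐ z ∂μ.prod ν, W z ≠ ∞)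
    (hM : ∀ᵐ x ∂μ, apRatio p ν (fun y => W (x, y)) ≤ M)
    (hN : ∀ᵐ y ∂ν, apRatio p μ (fun x => W (x, y)) ≤ N) {f : α → ℝ≥0∞} (hf : Measurable f)
    (hf_top : ∫⁻ x, f x ∂μ ≠ ∞) (hf_le : ∀ x, f x ≤ ∫⁻ y, W (x, y) ^ (-(1 / (p - 1))) ∂ν) :
    (∫⁻ z, W z ∂μ.prod ν) * (∫⁻ x, f x ∂μ) ^ (p - 1) ≤ M * N := by
  have hp₁ : 0 < p - 1 := sub_pos.2 hp
  rcases eq_or_ne (∫⁻ x, f x ∂μ) 0 with hf₀ | hf₀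
  · simp [hf₀, ENNReal.zero_rpow_of_pos hp₁]
  have slice_bound : ∀ᵐ x ∂μ, f x ^ p * ∫⁻ y, W (x, y) ∂ν ≤ M * f x := by
    filter_upwards [hM] with x hx
    calc f x ^ p * ∫⁻ y, W (x, y) ∂ν
        = (∫⁻ y, W (x, y) ∂ν) * f x ^ (p - 1) * f x := by
          rw [rpow_eq_mul_rpow_sub_one hp.le]; ring
      _ ≤ apRatio p ν (fun y => W (x, y)) * f x := by
          rw [apRatio]
          gcongr
          exact hf_le x
      _ ≤ M * f x := by gcongr
  refine (ENNReal.mul_le_mul_iff_right hf₀ hf_top).1 ?_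
  calc (∫⁻ x, f x ∂μ) * ((∫⁻ z, W z ∂μ.prod ν) * (∫⁻ x, f x ∂μ) ^ (p - 1))
      = (∫⁻ x, f x ∂μ) ^ p * ∫⁻ z, W z ∂μ.prod ν := by
        rw [rpow_eq_mul_rpow_sub_one hp.le]; ring
    _ ≤ N * ∫⁻ x, f x ^ p * ∫⁻ y, W (x, y) ∂ν ∂μ :=
        rpow_lintegral_mul_lintegral_prod_le hp hW hW₀ hW_top hN hf
    _ ≤ N * ∫⁻ x, M * f x ∂μ := mul_le_mul_right (lintegral_mono_ae slice_bound) N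
    _ = (∫⁻ x, f x ∂μ) * (M * N) := by
        rw [lintegral_const_mul _ hf]; ring

theorem apRatio_prod_le [IsFiniteMeasure μ] [SFinite ν] (hp : 1 < p)
    (hW : Measurable W) (hW₀ : ∀ᵐ z ∂μ.prod ν, W z ≠ 0) (hW_top : ∀ᵐ z ∂μ.prod ν, W z ≠ ∞)
    (hM : ∀ᵐ x ∂μ, apRatio p ν (fun y => W (x, y)) ≤ M)
    (hN : ∀ᵐ y ∂ν, apRatio p μ (fun x => W (x, y)) ≤ N) :
    apRatio p (μ.prod ν) W ≤ M * N := by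
  have hσ : Measurable fun z => W z ^ (-(1 / (p - 1))) := hW.pow_const _
  set F : α → ℝ≥0∞ := fun x => ∫⁻ y, W (x, y) ^ (-(1 / (p - 1))) ∂ν
  -- A factor `∫ F dμ` gets cancelled, so `F` is truncated to make its integral finite.
  have hFn (n : ℕ) : Measurable fun x => min (F x) n :=
    hσ.lintegral_prod_right'.min measurable_const
  have hFn_top (n : ℕ) : ∫⁻ x, min (F x) n ∂μ ≠ ∞ := by
    refine ne_top_of_le_ne_top ?_ (lintegral_mono fun x => min_le_right (F x) n)
    rw [lintegral_const]
    exact ENNReal.mul_ne_top (ENNReal.natCast_ne_top n) (measure_ne_top μ univ)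
  have lintegral_dual :
      ∫⁻ z, W z ^ (-(1 / (p - 1))) ∂μ.prod ν = ⨆ n : ℕ, ∫⁻ x, min (F x) n ∂μ := by
    rw [lintegral_prod _ hσ.aemeasurable, ← lintegral_iSup hFn]
    · simp only [iSup_min_natCast, F]
    · exact fun m n hmn x => min_le_min_left _ (Nat.cast_le.2 hmn)
  rw [apRatio, lintegral_dual, ← ENNReal.orderIsoRpow_apply _ (sub_pos.2 hp),
    OrderIso.map_iSup, ENNReal.mul_iSup]
  exact iSup_le fun n => lintegral_prod_mul_rpow_lintegral_le hp hW hW₀ hW_top hM hN (hFn n)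
    (hFn_top n) fun x => min_le_left _ _

end Product

section Differentiation

variable {α β : Type*} [MetricSpace α] [SecondCountableTopology α] [HasBesicovitchCovering α]
  [MeasurableSpace α] [BorelSpace α] [MeasurableSpace β] {μ : Measure α} [IsLocallyFiniteMeasure μ]

lemma ae_tendsto_lintegral_cond_closedBall {f : α → ℝ≥0∞} (hf : AEMeasurable f μ)
    [IsLocallyFiniteMeasure (μ.withDensity f)] :
    ∀ᵐ x ∂μ, Tendsto (fun r => ∫⁻ y, f y ∂μ[|Metric.closedBall x r]) (𝓝[>] 0) (𝓝 (f x)) := by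
  filter_upwards [Besicovitch.ae_tendsto_rnDeriv (μ.withDensity f) μ,
    Measure.rnDeriv_withDensity₀ μ hf] with x hx hfx
  rw [hfx] at hx
  simpa only [lintegral_cond,
    withDensity_apply _ Metric.isClosed_closedBall.measurableSet] using hx

theorem ae_mul_rpow_le_of_forall_closedBall {f g : α → ℝ≥0∞} (hf : AEMeasurable f μ)
    (hg : AEMeasurable g μ) {q : ℝ} (hq : 0 < q) {K : ℝ≥0∞}
    (hK : ∀ x r, 0 < r → (∫⁻ y, f y ∂μ[|Metric.closedBall x r]) *
      (∫⁻ y, g y ∂μ[|Metric.closedBall x r]) ^ q ≤ K) :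
    ∀ᵐ x ∂μ, f x * g x ^ q ≤ K := by
  -- Truncation makes the two densities locally integrable.
  have tendsto_truncation {h : α → ℝ≥0∞} (hh : AEMeasurable h μ) (n : ℕ) : ∀ᵐ x ∂μ,
      Tendsto (fun r => ∫⁻ y, min (h y) n ∂μ[|Metric.closedBall x r]) (𝓝[>] 0)
        (𝓝 (min (h x) n)) := by
    have : IsLocallyFiniteMeasure (μ.withDensity fun x => min (h x) n) :=
      isLocallyFiniteMeasure_withDensity_of_le (c := n) fun x => min_le_right (h x) n
    exact ae_tendsto_lintegral_cond_closedBall (hh.min aemeasurable_const)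
  have min_ne_top (a : ℝ≥0∞) (n : ℕ) : min a n ≠ ∞ :=
    ne_top_of_le_ne_top (ENNReal.natCast_ne_top n) (min_le_right a n)
  filter_upwards [ae_all_iff.2 (tendsto_truncation hf), ae_all_iff.2 (tendsto_truncation hg)]
    with x hfx hgx
  have truncated_bound (m n : ℕ) : min (f x) m * min (g x) n ^ q ≤ K := by
    have hlim := ENNReal.Tendsto.mul (hfx m)
      (.inr (ENNReal.rpow_ne_top_of_nonneg hq.le (min_ne_top (g x) n)))
      ((hgx n).ennrpow_const q) (.inr (min_ne_top (f x) m))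
    refine le_of_tendsto hlim ?_
    filter_upwards [self_mem_nhdsWithin] with r hr
    refine le_trans ?_ (hK x r hr)
    gcongr <;> exact min_le_left _ _
  rw [← iSup_min_natCast (f x), ← iSup_min_natCast (g x), ← ENNReal.orderIsoRpow_apply _ hq,
    OrderIso.map_iSup, ENNReal.iSup_mul]
  refine iSup_le fun m => ?_
  rw [ENNReal.mul_iSup]
  exact iSup_le (truncated_bound m)

theorem ae_apRatio_slice_le {p : ℝ} (hp : 1 < p) {ν : Measure β} [SFinite ν]
    {W : α × β → ℝ≥0∞} (hW : Measurable W) {K : ℝ≥0∞}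
    (hK : ∀ x r, 0 < r → apRatio p (μ[|Metric.closedBall x r].prod ν) W ≤ K) :
    ∀ᵐ x ∂μ, apRatio p ν (fun y => W (x, y)) ≤ K := by
  have hσ : Measurable fun z => W z ^ (-(1 / (p - 1))) := hW.pow_const _
  refine ae_mul_rpow_le_of_forall_closedBall hW.lintegral_prod_right'.aemeasurable
    hσ.lintegral_prod_right'.aemeasurable (sub_pos.2 hp) fun x r hr => ?_
  rw [← lintegral_prod _ hW.aemeasurable, ← lintegral_prod _ hσ.aemeasurable]
  exact hK x r hr

end Differentiation

section Cubes

variable {d : ℕ}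

lemma isCube_cubeOf (a : Fin d → ℝ) {h : ℝ} (hh : 0 < h) : IsCube (cubeOf a h) :=
  ⟨a, h, hh, rfl⟩

lemma volume_cubeOf (a : Fin d → ℝ) (h : ℝ) : volume (cubeOf a h) = ENNReal.ofReal h ^ d := by
  simp [cubeOf, Real.volume_pi_Ico]

lemma volume_ne_zero_of_isCube {I : Set (Fin d → ℝ)} (hI : IsCube I) : volume I ≠ 0 := by
  obtain ⟨a, h, hh, rfl⟩ := hI
  simp [volume_cubeOf, hh]

lemma volume_ne_top_of_isCube {I : Set (Fin d → ℝ)} (hI : IsCube I) : volume I ≠ ∞ := by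
  obtain ⟨a, h, -, rfl⟩ := hI
  simp [volume_cubeOf]

lemma cubeOf_ae_eq_closedBall (x : Fin d → ℝ) {r : ℝ} (hr : 0 ≤ r) :
    cubeOf (fun i => x i - r) (2 * r) =ᵐ[volume] Metric.closedBall x r := by
  have : Metric.closedBall x r = Icc (fun i => x i - r) fun i => x i - r + 2 * r := by
    rw [closedBall_pi x hr, ← pi_univ_Icc]
    congr 1
    funext i
    rw [Real.closedBall_eq_Icc]
    congr 1
    ring
  rw [this]
  exact Measure.univ_pi_Ico_ae_eq_Icc

lemma exists_rat_cubeOf_superset (a : Fin d → ℝ) {h c : ℝ} (hc : h < c) :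
    ∃ (a' : Fin d → ℚ) (h' : ℚ), h < h' ∧ h' < c ∧
      cubeOf a h ⊆ cubeOf (fun i => (a' i : ℝ)) h' := by
  obtain ⟨h', hh', hc'⟩ := exists_rat_btwn hc
  have exists_corner (i : Fin d) : ∃ q : ℚ, a i + h - h' < q ∧ (q : ℝ) < a i :=
    exists_rat_btwn (by linarith)
  choose a' ha' ha using exists_corner
  refine ⟨a', h', hh', hc', pi_mono fun i _ => Ico_subset_Ico (ha i).le ?_⟩
  linarith [ha' i]

lemma apRatio_cube_le_of_forall_rat {p : ℝ} (hp : 1 ≤ p) {W : (Fin d → ℝ) → ℝ≥0∞} {K : ℝ≥0∞}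
    (hK : ∀ (a : Fin d → ℚ) (h : ℚ), 0 < h →
      apRatio p volume[|cubeOf (fun i => (a i : ℝ)) h] W ≤ K)
    {I : Set (Fin d → ℝ)} (hI : IsCube I) : apRatio p volume[|I] W ≤ K := by
  have hI₀ := volume_ne_zero_of_isCube hI
  have hI_top := volume_ne_top_of_isCube hI
  obtain ⟨a, h, hh, rfl⟩ := hI
  have bound (c : ℝ) (hc : h < c) : apRatio p volume[|cubeOf a h] W ≤
      (ENNReal.ofReal c ^ d / volume (cubeOf a h)) ^ p * K := by
    obtain ⟨a', h', hh', hc', hsub⟩ := exists_rat_cubeOf_superset a hc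
    have hpos : 0 < (h' : ℝ) := hh.trans hh'
    have hcube := isCube_cubeOf (fun i => (a' i : ℝ)) hpos
    refine (apRatio_cond_le hp hsub (volume_ne_zero_of_isCube hcube)
      (volume_ne_top_of_isCube hcube) W).trans ?_
    rw [volume_cubeOf _ (h' : ℝ)]
    gcongr
    exact hK a' h' (by exact_mod_cast hpos)
  have hlim : Tendsto (fun c => (ENNReal.ofReal c ^ d / volume (cubeOf a h)) ^ p * K) (𝓝[>] h)
      (𝓝 K) := by
    have hratio : Tendsto (fun c => (ENNReal.ofReal c ^ d / volume (cubeOf a h)) ^ p) (𝓝[>] h)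
        (𝓝 1) := by
      have hnum : Tendsto (fun c => ENNReal.ofReal c ^ d) (𝓝[>] h) (𝓝 (volume (cubeOf a h))) := by
        rw [volume_cubeOf]
        exact (((ENNReal.continuous_pow d).comp ENNReal.continuous_ofReal).tendsto h).mono_left
          nhdsWithin_le_nhds
      have := (ENNReal.Tendsto.div_const (b := volume (cubeOf a h)) hnum (.inl hI₀)).ennrpow_const p
      rwa [ENNReal.div_self hI₀ hI_top, ENNReal.one_rpow] at this
    simpa using ENNReal.Tendsto.mul_const hratio (.inl one_ne_zero)
  exact ge_of_tendsto hlim (eventually_mem_nhdsWithin.mono bound)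

end Cubes

section Characteristics

variable {X : Type*} [MeasureSpace X] {d d₁ d₂ : ℕ} {p : ℝ} {K : ℝ≥0∞}

lemma avgE_eq_lintegral_cond (R : Set X) (f : X → ℝ) :
    avgE R f = ∫⁻ x, ENNReal.ofReal (f x) ∂volume[|R] :=
  (lintegral_cond volume R _).symm

lemma arRatio_eq_apRatio (hp : 1 < p) {v : X → ℝ} (hv : ∀ᵐ x, 0 < v x) (R : Set X) :
    ArRatio (ENNReal.ofReal p) R v = apRatio p volume[|R] fun x => ENNReal.ofReal (v x) := by
  have hp₁ : ENNReal.ofReal p ≠ 1 := by simpa using hp.ne'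
  have hdual : ∫⁻ x, ENNReal.ofReal (v x ^ (-(1 / (p - 1)))) ∂volume[|R] =
      ∫⁻ x, ENNReal.ofReal (v x) ^ (-(1 / (p - 1))) ∂volume[|R] := by
    refine lintegral_congr_ae ?_
    filter_upwards [ProbabilityTheory.cond_absolutelyContinuous.ae_le hv] with x hx
    exact (ENNReal.ofReal_rpow_of_pos hx).symm
  rw [ArRatio, if_neg hp₁, ENNReal.toReal_ofReal (zero_le_one.trans hp.le),
    avgE_eq_lintegral_cond, avgE_eq_lintegral_cond, hdual, apRatio]

lemma arCube_le_iff (hp : 1 < p) {v : (Fin d → ℝ) → ℝ} (hv : ∀ᵐ x, 0 < v x) :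
    ArCube (ENNReal.ofReal p) v ≤ K ↔
      ∀ I, IsCube I → apRatio p volume[|I] (fun x => ENNReal.ofReal (v x)) ≤ K := by
  simp only [ArCube, iSup₂_le_iff, arRatio_eq_apRatio hp hv]

lemma arRect_le_iff (hp : 1 < p) {w : Pt d₁ d₂ → ℝ} (hw : ∀ᵐ z, 0 < w z) :
    ArRect (ENNReal.ofReal p) w ≤ K ↔ ∀ I J, IsCube I → IsCube J →
      apRatio p (volume[|I].prod volume[|J]) (fun z => ENNReal.ofReal (w z)) ≤ K := by
  have hprod {I : Set (Fin d₁ → ℝ)} (J : Set (Fin d₂ → ℝ)) (hI : IsCube I) :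
      (volume : Measure (Pt d₁ d₂))[|I ×ˢ J] = volume[|I].prod volume[|J] :=
    cond_prod (volume_ne_zero_of_isCube hI) (volume_ne_top_of_isCube hI)
  simp only [ArRect, iSup₂_le_iff, arRatio_eq_apRatio hp hw]
  constructor
  · intro h I J hI hJ
    rw [← hprod J hI]
    exact h _ ⟨I, J, hI, hJ, rfl⟩
  · rintro h _ ⟨I, J, hI, hJ, rfl⟩
    rw [hprod J hI]
    exact h I J hI hJ

lemma arRect_comp_swap_le (hp : 1 < p) {w : Pt d₁ d₂ → ℝ} (hw : ∀ᵐ z, 0 < w z) :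
    ArRect (ENNReal.ofReal p) (w ∘ Prod.swap) ≤ ArRect (ENNReal.ofReal p) w := by
  refine (arRect_le_iff hp (ae_comp_swap hw)).2 fun J I hJ hI => ?_
  exact (apRatio_prod_swap p volume[|I] volume[|J] fun z => ENNReal.ofReal (w z)).trans_le
    ((arRect_le_iff hp hw).1 le_rfl I J hI hJ)

variable {w : Pt d₁ d₂ → ℝ}

theorem essSup_arCube_left_le_arRect (hp : 1 < p) (hw : Measurable w) (hpos : ∀ᵐ z, 0 < w z) :
    essSup (fun x₁ => ArCube (ENNReal.ofReal p) fun x₂ => w (x₁, x₂)) volume ≤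
      ArRect (ENNReal.ofReal p) w := by
  have slice_le (J : Set (Fin d₂ → ℝ)) (hJ : IsCube J) : ∀ᵐ x₁,
      apRatio p volume[|J] (fun x₂ => ENNReal.ofReal (w (x₁, x₂))) ≤
        ArRect (ENNReal.ofReal p) w := by
    refine ae_apRatio_slice_le hp hw.ennreal_ofReal fun x r hr => ?_
    rw [← cond_congr_set (cubeOf_ae_eq_closedBall x hr.le)]
    exact (arRect_le_iff hp hpos).1 le_rfl _ J (isCube_cubeOf _ (by positivity)) hJ
  have rat_slice_le : ∀ᵐ x₁, ∀ (a : Fin d₂ → ℚ) (h : ℚ), 0 < h →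
      apRatio p volume[|cubeOf (fun i => (a i : ℝ)) h] (fun x₂ => ENNReal.ofReal (w (x₁, x₂))) ≤
        ArRect (ENNReal.ofReal p) w := by
    simp only [ae_all_iff]
    exact fun a h hh => slice_le _ (isCube_cubeOf _ (by exact_mod_cast hh))
  refine essSup_le_of_ae_le _ ?_
  filter_upwards [rat_slice_le, Measure.ae_ae_of_ae_prod hpos] with x₁ hx₁ hpos₁
  exact (arCube_le_iff hp hpos₁).2 fun J hJ => apRatio_cube_le_of_forall_rat hp.le hx₁ hJ

theorem essSup_arCube_right_le_arRect (hp : 1 < p) (hw : Measurable w) (hpos : ∀ᵐ z, 0 < w z) :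
    essSup (fun x₂ => ArCube (ENNReal.ofReal p) fun x₁ => w (x₁, x₂)) volume ≤
      ArRect (ENNReal.ofReal p) w :=
  (essSup_arCube_left_le_arRect hp (hw.comp measurable_swap) (ae_comp_swap hpos)).trans
    (arRect_comp_swap_le hp hpos)

lemma ae_apRatio_slice_le_essSup_arCube (hp : 1 < p) (hpos : ∀ᵐ z, 0 < w z)
    {J : Set (Fin d₂ → ℝ)} (hJ : IsCube J) :
    ∀ᵐ x₁, apRatio p volume[|J] (fun x₂ => ENNReal.ofReal (w (x₁, x₂))) ≤
      essSup (fun x₁ => ArCube (ENNReal.ofReal p) fun x₂ => w (x₁, x₂)) volume := by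
  filter_upwards [Measure.ae_ae_of_ae_prod hpos,
    ENNReal.ae_le_essSup fun x₁ => ArCube (ENNReal.ofReal p) fun x₂ => w (x₁, x₂)]
    with x₁ hpos₁ hx₁
  exact (arCube_le_iff hp hpos₁).1 hx₁ J hJ

theorem arRect_le_essSup_mul_essSup (hp : 1 < p) (hw : Measurable w) (hpos : ∀ᵐ z, 0 < w z) :
    ArRect (ENNReal.ofReal p) w ≤
      essSup (fun x₁ => ArCube (ENNReal.ofReal p) fun x₂ => w (x₁, x₂)) volume *
        essSup (fun x₂ => ArCube (ENNReal.ofReal p) fun x₁ => w (x₁, x₂)) volume := by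
  refine (arRect_le_iff hp hpos).2 fun I J hI hJ => ?_
  have hcond : volume[|I].prod volume[|J] ≪ (volume : Measure (Pt d₁ d₂)) :=
    ProbabilityTheory.cond_absolutelyContinuous.prod ProbabilityTheory.cond_absolutelyContinuous
  have hpos' : ∀ᵐ z ∂volume[|I].prod volume[|J], 0 < w z := hcond.ae_le hpos
  exact apRatio_prod_le hp hw.ennreal_ofReal
    (hpos'.mono fun z hz => (ENNReal.ofReal_pos.2 hz).ne')
    (.of_forall fun _ => ENNReal.ofReal_ne_top)
    (ProbabilityTheory.cond_absolutelyContinuous.ae_le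
      (ae_apRatio_slice_le_essSup_arCube hp hpos hJ))
    (ProbabilityTheory.cond_absolutelyContinuous.ae_le
      (ae_apRatio_slice_le_essSup_arCube hp (ae_comp_swap hpos) hI))

end Characteristics

end Muckenhoupt

/-- Slice characterization of bi-parameter `A_p`.
For `1 < p < ∞` there are `C < ∞` and a power `t > 0`, depending only on `p` and the
dimensions, such that for every weight `w`: writing `M` for the maximum of the two essential
suprema of the one-parameter slice characteristics, we have
`[w]_{A_p(ℝ^{d₁}×ℝ^{d₂})} < ∞ ↔ M < ∞`, `M ≤ [w]_{A_p}` and `[w]_{A_p} ≤ C M^t`. -/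
theorem statement6 (d₁ d₂ : ℕ) (p : ℝ) (hp : 1 < p) :
    ∃ (C : ℝ≥0∞) (t : ℝ), C < ∞ ∧ 0 < t ∧
      ∀ w : Pt d₁ d₂ → ℝ, Measurable w →
        (∀ᵐ x ∂(volume : Measure (Pt d₁ d₂)), 0 < w x) →
        ((ArRect (ENNReal.ofReal p) w < ∞ ↔
            max
              (essSup (fun x₁ => ArCube (ENNReal.ofReal p) (fun x₂ => w (x₁, x₂)))
                (volume : Measure (Fin d₁ → ℝ)))
              (essSup (fun x₂ => ArCube (ENNReal.ofReal p) (fun x₁ => w (x₁, x₂)))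
                (volume : Measure (Fin d₂ → ℝ))) < ∞) ∧
          max
              (essSup (fun x₁ => ArCube (ENNReal.ofReal p) (fun x₂ => w (x₁, x₂)))
                (volume : Measure (Fin d₁ → ℝ)))
              (essSup (fun x₂ => ArCube (ENNReal.ofReal p) (fun x₁ => w (x₁, x₂)))
                (volume : Measure (Fin d₂ → ℝ)))
            ≤ ArRect (ENNReal.ofReal p) w ∧
          ArRect (ENNReal.ofReal p) w ≤
            C * (max
              (essSup (fun x₁ => ArCube (ENNReal.ofReal p) (fun x₂ => w (x₁, x₂)))
                (volume : Measure (Fin d₁ → ℝ)))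
              (essSup (fun x₂ => ArCube (ENNReal.ofReal p) (fun x₁ => w (x₁, x₂)))
                (volume : Measure (Fin d₂ → ℝ)))) ^ t) := by
  refine ⟨1, 2, one_lt_top, two_pos, fun w hw hpos => ?_⟩
  have lower := max_le (Muckenhoupt.essSup_arCube_left_le_arRect hp hw hpos)
    (Muckenhoupt.essSup_arCube_right_le_arRect hp hw hpos)
  have upper := (Muckenhoupt.arRect_le_essSup_mul_essSup hp hw hpos).trans
    (Muckenhoupt.mul_le_max_rpow_two _ _)
  refine ⟨⟨lower.trans_lt, fun h => upper.trans_lt ?_⟩, lower, by rwa [one_mul]⟩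
  exact rpow_lt_top_of_nonneg zero_le_two h.ne
end
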